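/- Let B be a quadratic pair algebra and let a,b,c ∈ h₀B be homogeneous of degrees p,q,r with a·b = 0 and b·c = 0. For any representatives ā ∈ B_{p,0}, b̄ ∈ B_{q,0}, c̄ ∈ B_{r,0} of a,b,c there exist e ∈ B_{p+q,1} and f ∈ B_{q+r,1} with ∂(e) = ā·b̄ and ∂(f) = b̄·c̄; for every such choice the element −e·c̄ + ā·f lies in h₁B_{p+q+r} = Ker(∂) in degree p+q+r; and the set ⟨a,b,c⟩ of all elements arising in this way from all choices of ā, b̄, c̄, e, f (the Massey product) is a coset of the subgroup (h₁B_{p+q})·c + a·(h₁B_{q+r}) of h₁B_{p+q+r}. -/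

import Mathlib

/-!
The failure of left distributivity is measured by the defect `D(x, y; z) = P((y|x)_H · H(z))`.
It satisfies `a·D(x, y; z) = D(a·x, a·y; z)` and the cocycle rule
`D(x, y; b·c) = D(x·b, y·b; c) + D(x, y; b)·c`. Because of these two rules, replacing a
representative by another one, and correcting `e` and `f` accordingly, adds the same right summand
to `e·c̄` and to `ā·f`. Since `-e·c̄ + ā·f` lies in `Ker ∂`, which is central because commutators in
`B₁` are `P((∂x|∂y)_H)`, conjugating by that summand changes nothing: the elements obtained from one
fixed choice of representatives already exhaust the Massey product.

For fixed representatives `e` and `f` are unique up to `Ker ∂`, where the defects vanish, so that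
`(s, t) ↦ s·c + a·t` is a homomorphism on `Ker ∂ × Ker ∂`. Its range is the indeterminacy, and
replacing `(e, f)` by `(e - s, f + t)` translates `-e·c + a·f` by its value at `(s, t)`.
-/

/-- The cross effect `(a|b)_H = H(a+b) - H(b) - H(a)` of a function `H` between groups. -/
def crossEff {Xe Xee : Type*} [AddGroup Xe] [AddCommGroup Xee]
    (H : Xe → Xee) (a b : Xe) : Xee :=
  H (a + b) - H b - H a

/-- A square group structure on a (not necessarily abelian) group `Xe` and an abelian
group `Xee`, given by a homomorphism `P : Xee → Xe` and a quadratic map `H : Xe → Xee`. -/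
structure IsSquareGroup {Xe Xee : Type*} [AddGroup Xe] [AddCommGroup Xee]
    (P : Xee →+ Xe) (H : Xe → Xee) : Prop where
  cross_add_left : ∀ a b c : Xe,
    crossEff H (a + b) c = crossEff H a c + crossEff H b c
  cross_add_right : ∀ a b c : Xe,
    crossEff H a (b + c) = crossEff H a b + crossEff H a c
  cross_P_left : ∀ (x : Xee) (b : Xe), crossEff H (P x) b = 0
  cross_P_right : ∀ (a : Xe) (y : Xee), crossEff H a (P y) = 0
  P_cross : ∀ a b : Xe, P (crossEff H a b) = -a - b + a + b
  P_H_P : ∀ x : Xee, P (H (P x)) = P x + P x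


/-- A quadratic pair algebra: an ℕ-graded quadratic pair module `{B_{n,*}}` together with
multiplications on levels 0, 1 and ee (indexed by a proof `p + q = r` recording degrees),
a unit `1 ∈ B_{0,0}` with `H(1) = 0` (whose cross-square `(1|1)_H` is a unit for the
ee-multiplication), satisfying associativity, right linearity, left distributivity with
quadratic correction terms, and the compatibility laws with `∂`, `P` and `H`. -/
structure QuadraticPairAlgebra (B0 B1 Bee : ℕ → Type*)
    [∀ n, AddGroup (B0 n)] [∀ n, AddGroup (B1 n)] [∀ n, AddCommGroup (Bee n)] where
  d : ∀ n, B1 n →+ B0 n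
  P : ∀ n, Bee n →+ B1 n
  H : ∀ n, B0 n → Bee n
  sq0 : ∀ n, IsSquareGroup ((d n).comp (P n)) (H n)
  sq1 : ∀ n, IsSquareGroup (P n) (H n ∘ d n)
  mul : ∀ {p q r : ℕ}, p + q = r → B0 p → B0 q → B0 r
  smul : ∀ {p q r : ℕ}, p + q = r → B0 p → B1 q → B1 r
  smulr : ∀ {p q r : ℕ}, p + q = r → B1 p → B0 q → B1 r
  mulee : ∀ {p q r : ℕ}, p + q = r → Bee p → Bee q → Bee r
  one : B0 0
  H_one : H 0 one = 0
  one_mul : ∀ {q : ℕ} (x : B0 q), mul (Nat.zero_add q) one x = x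
  mul_one : ∀ {p : ℕ} (x : B0 p), mul rfl x one = x
  one_smul : ∀ {q : ℕ} (s : B1 q), smul (Nat.zero_add q) one s = s
  smulr_one : ∀ {p : ℕ} (s : B1 p), smulr rfl s one = s
  crossone_mulee : ∀ {q : ℕ} (a : Bee q),
    mulee (Nat.zero_add q) (crossEff (H 0) one one) a = a
  mulee_crossone : ∀ {p : ℕ} (a : Bee p),
    mulee rfl a (crossEff (H 0) one one) = a
  mul_assoc : ∀ {p q r : ℕ} (x : B0 p) (y : B0 q) (z : B0 r),
    mul rfl (mul rfl x y) z = mul (Nat.add_assoc p q r).symm x (mul rfl y z)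
  mul_smul_assoc : ∀ {p q r : ℕ} (x : B0 p) (y : B0 q) (s : B1 r),
    smul rfl (mul rfl x y) s = smul (Nat.add_assoc p q r).symm x (smul rfl y s)
  smul_smulr_assoc : ∀ {p q r : ℕ} (x : B0 p) (s : B1 q) (y : B0 r),
    smulr rfl (smul rfl x s) y = smul (Nat.add_assoc p q r).symm x (smulr rfl s y)
  smulr_mul_assoc : ∀ {p q r : ℕ} (s : B1 p) (y : B0 q) (z : B0 r),
    smulr rfl (smulr rfl s y) z = smulr (Nat.add_assoc p q r).symm s (mul rfl y z)
  mulee_assoc : ∀ {p q r : ℕ} (a : Bee p) (b : Bee q) (c : Bee r),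
    mulee rfl (mulee rfl a b) c = mulee (Nat.add_assoc p q r).symm a (mulee rfl b c)
  -- right linearity
  mul_add : ∀ {p q r : ℕ} (h : p + q = r) (x : B0 p) (y y' : B0 q),
    mul h x (y + y') = mul h x y + mul h x y'
  smul_add : ∀ {p q r : ℕ} (h : p + q = r) (x : B0 p) (s s' : B1 q),
    smul h x (s + s') = smul h x s + smul h x s'
  smulr_add : ∀ {p q r : ℕ} (h : p + q = r) (s : B1 p) (x x' : B0 q),
    smulr h s (x + x') = smulr h s x + smulr h s x'
  mulee_add : ∀ {p q r : ℕ} (h : p + q = r) (a : Bee p) (b b' : Bee q),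
    mulee h a (b + b') = mulee h a b + mulee h a b'
  -- left distributivity with quadratic corrections
  add_mul : ∀ {p q r : ℕ} (h : p + q = r) (x₁ x₂ : B0 p) (x₃ : B0 q),
    mul h (x₁ + x₂) x₃ = mul h x₁ x₃ + mul h x₂ x₃
      + d r (P r (mulee h (crossEff (H p) x₂ x₁) (H q x₃)))
  add_smul : ∀ {p q r : ℕ} (h : p + q = r) (x₁ x₂ : B0 p) (s : B1 q),
    smul h (x₁ + x₂) s = smul h x₁ s + smul h x₂ s
      + P r (mulee h (crossEff (H p) x₂ x₁) (H q (d q s)))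
  add_smulr : ∀ {p q r : ℕ} (h : p + q = r) (s₁ s₂ : B1 p) (x : B0 q),
    smulr h (s₁ + s₂) x = smulr h s₁ x + smulr h s₂ x
      + P r (mulee h (crossEff (H p) (d p s₂) (d p s₁)) (H q x))
  add_mulee : ∀ {p q r : ℕ} (h : p + q = r) (a₁ a₂ : Bee p) (a₃ : Bee q),
    mulee h (a₁ + a₂) a₃ = mulee h a₁ a₃ + mulee h a₂ a₃
  -- compatibility of ∂ with the multiplications
  d_smul : ∀ {p q r : ℕ} (h : p + q = r) (x : B0 p) (s : B1 q),
    d r (smul h x s) = mul h x (d q s)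
  d_smulr : ∀ {p q r : ℕ} (h : p + q = r) (s : B1 p) (x : B0 q),
    d r (smulr h s x) = mul h (d p s) x
  smul_d : ∀ {p q r : ℕ} (h : p + q = r) (s : B1 p) (t : B1 q),
    smul h (d p s) t = smulr h s (d q t)
  -- compatibility with P, H, Δ and the cross effect
  P_cross_mulee : ∀ {p q r : ℕ} (h : p + q = r) (x : B0 p) (a : Bee q),
    P r (mulee h (crossEff (H p) x x) a) = smul h x (P q a)
  P_mulee_delta : ∀ {p q r : ℕ} (h : p + q = r) (a : Bee p) (x : B0 q),
    P r (mulee h a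
      (crossEff (H q) x x - H q x + (H q (d q (P q (H q x))) - H q x)))
      = smulr h (P p a) x
  H_mul : ∀ {p q r : ℕ} (h : p + q = r) (x₁ : B0 p) (x₂ : B0 q),
    H r (mul h x₁ x₂) = mulee h (crossEff (H p) x₁ x₁) (H q x₂)
      + mulee h (H p x₁)
          (crossEff (H q) x₂ x₂ - H q x₂ + (H q (d q (P q (H q x₂))) - H q x₂))
  HdP_mulee : ∀ {p q r : ℕ} (h : p + q = r) (a₁ : Bee p) (a₂ : Bee q),
    H r (d r (P r (mulee h a₁ a₂)))
      = mulee h (H p (d p (P p a₁))) a₂ + mulee h a₁ (H q (d q (P q a₂)))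
        - mulee h (H p (d p (P p a₁))) (H q (d q (P q a₂)))
  cross_mul : ∀ {p q r : ℕ} (h : p + q = r) (x₁ x₃ : B0 p) (x₂ x₄ : B0 q),
    crossEff (H r) (mul h x₁ x₂) (mul h x₃ x₄)
      = mulee h (crossEff (H p) x₁ x₃) (crossEff (H q) x₂ x₄)

variable {B0 B1 Bee : ℕ → Type*}
  [∀ n, AddGroup (B0 n)] [∀ n, AddGroup (B1 n)] [∀ n, AddCommGroup (Bee n)]

/-- The Massey product set `⟨a,b,c⟩ ⊆ B1 (p+q+r)` of the classes of `a0`, `b0`, `c0` in a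
quadratic pair algebra: all elements `−e·c̄ + ā·f` where `ā = a0 + ∂u`, `b̄ = b0 + ∂v`,
`c̄ = c0 + ∂w` range over representatives and `∂e = ā·b̄`, `∂f = b̄·c̄`. -/
def masseySet (A : QuadraticPairAlgebra B0 B1 Bee) (p q r : ℕ)
    (a0 : B0 p) (b0 : B0 q) (c0 : B0 r) : Set (B1 (p + q + r)) :=
  {z | ∃ (u : B1 p) (v : B1 q) (w : B1 r) (e : B1 (p + q)) (f : B1 (q + r)),
    A.d (p + q) e = A.mul rfl (a0 + A.d p u) (b0 + A.d q v) ∧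
    A.d (q + r) f = A.mul rfl (b0 + A.d q v) (c0 + A.d r w) ∧
    z = -(A.smulr rfl e (c0 + A.d r w)) +
        A.smul (Nat.add_assoc p q r).symm (a0 + A.d p u) f}

/-- The indeterminacy subgroup `(h₁B_{p+q})·c + a·(h₁B_{q+r}) ⊆ h₁B_{p+q+r}`. -/
def indetSet (A : QuadraticPairAlgebra B0 B1 Bee) (p q r : ℕ)
    (a0 : B0 p) (c0 : B0 r) : Set (B1 (p + q + r)) :=
  {z | ∃ (s : B1 (p + q)) (t : B1 (q + r)),
    A.d (p + q) s = 0 ∧ A.d (q + r) t = 0 ∧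
    z = A.smulr rfl s c0 + A.smul (Nat.add_assoc p q r).symm a0 t}

theorem neg_add_add_add_of_addCommute {G : Type*} [AddGroup G] {x y z : G}
    (h : AddCommute (-x + y) z) : -(x + z) + (y + z) = -x + y := by
  rw [neg_add_rev, add_assoc, ← add_assoc (-x), h.eq, neg_add_cancel_left]

namespace IsSquareGroup

variable {Xe Xee : Type*} [AddGroup Xe] [AddCommGroup Xee] {P : Xee →+ Xe} {H : Xe → Xee}

theorem crossEff_zero_left (hS : IsSquareGroup P H) (x : Xe) : crossEff H 0 x = 0 := by
  simpa using hS.cross_P_left 0 x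

theorem addCommute_of_crossEff_eq_zero (hS : IsSquareGroup P H) {x y : Xe}
    (hxy : crossEff H x y = 0) : AddCommute x y := by
  have hcomm := hS.P_cross x y
  rw [hxy, map_zero, sub_eq_add_neg, ← neg_add_rev, add_assoc] at hcomm
  exact (neg_add_eq_zero.mp hcomm.symm).symm

end IsSquareGroup

namespace QuadraticPairAlgebra

variable (A : QuadraticPairAlgebra B0 B1 Bee) {p q r n : ℕ} (h : p + q = n)

theorem addCommute_of_d_eq_zero {x : B1 n} (hx : A.d n x = 0) (y : B1 n) : AddCommute x y := by
  refine (A.sq1 n).addCommute_of_crossEff_eq_zero ?_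
  simpa [crossEff, hx] using (A.sq0 n).crossEff_zero_left (A.d n y)

theorem zero_mulee (a : Bee q) : A.mulee h (0 : Bee p) a = 0 := by
  simpa using A.add_mulee h 0 0 a

/-! ### The defect of left distributivity -/

/-- The defect `D(x₁, x₂; x₃) = P((x₂|x₁)_H · H(x₃))` of left distributivity, taken in `B₁` so that
`(x₁ + x₂)·x₃ = x₁·x₃ + x₂·x₃ + ∂D(x₁, x₂; x₃)` in `B₀`. -/
def defect (x₁ x₂ : B0 p) (x₃ : B0 q) : B1 n :=
  A.P n (A.mulee h (crossEff (A.H p) x₂ x₁) (A.H q x₃))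

theorem defect_d_P (x : B0 p) (a : Bee p) (y : B0 q) :
    A.defect h x (A.d p (A.P p a)) y = 0 := by
  have hcross : crossEff (A.H p) (A.d p (A.P p a)) x = 0 := (A.sq0 p).cross_P_left a x
  rw [defect, hcross, A.zero_mulee, map_zero]

theorem defect_zero (x : B0 p) (y : B0 q) : A.defect h x 0 y = 0 := by
  simpa using A.defect_d_P h x 0 y

theorem smul_defect (a : B0 p) (x y : B0 q) (z : B0 r) :
    A.smul (Nat.add_assoc p q r).symm a (A.defect rfl x y z) =
      A.defect rfl (A.mul rfl a x) (A.mul rfl a y) z := by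
  rw [defect, defect, A.cross_mul, A.mulee_assoc, A.P_cross_mulee]

theorem defect_mul (x y : B0 p) (b : B0 q) (c : B0 r) :
    A.defect (Nat.add_assoc p q r).symm x y (A.mul rfl b c) =
      A.defect rfl (A.mul rfl x b) (A.mul rfl y b) c + A.smulr rfl (A.defect rfl x y b) c := by
  simp only [defect]
  rw [A.H_mul, A.mulee_add, map_add, ← A.mulee_assoc, ← A.mulee_assoc, ← A.cross_mul,
    A.P_mulee_delta]

theorem add_defect_smulr (s : B1 (p + q)) (x y : B0 p) (b : B0 q) (c : B0 r) :
    A.smulr rfl (s + A.defect rfl x y b) c =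
      A.smulr rfl s c + A.smulr rfl (A.defect rfl x y b) c := by
  rw [A.add_smulr, ← defect, defect, A.defect_d_P, add_zero]

/-! ### Products with elements of `Ker ∂` -/

theorem add_smulr_of_d_eq_zero (s₁ : B1 p) {s₂ : B1 p} (hs : A.d p s₂ = 0) (x : B0 q) :
    A.smulr h (s₁ + s₂) x = A.smulr h s₁ x + A.smulr h s₂ x := by
  rw [A.add_smulr, ← defect, hs, A.defect_zero, add_zero]

theorem sub_smulr_of_d_eq_zero (s₁ : B1 p) {s₂ : B1 p} (hs : A.d p s₂ = 0) (x : B0 q) :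
    A.smulr h (s₁ - s₂) x = A.smulr h s₁ x - A.smulr h s₂ x := by
  rw [eq_sub_iff_add_eq, ← A.add_smulr_of_d_eq_zero h _ hs, sub_add_cancel]

theorem zero_mul (x : B0 q) : A.mul h (0 : B0 p) x = 0 := by
  have hadd := A.add_mul h 0 0 x
  rwa [← defect, A.defect_zero, map_zero, add_zero, add_zero, left_eq_add] at hadd

theorem d_smulr_eq_zero {s : B1 p} (hs : A.d p s = 0) (x : B0 q) :
    A.d n (A.smulr h s x) = 0 := by
  rw [A.d_smulr, hs, A.zero_mul]

/-- Left multiplication `s ↦ x·s` on `B₁` as a homomorphism. -/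
def smulHom (x : B0 p) : B1 q →+ B1 n :=
  AddMonoidHom.mk' (A.smul h x) (A.smul_add h x)

/-- Right multiplication `s ↦ s·x` as a homomorphism; it is additive only on `Ker ∂`. -/
def kerSmulrHom (x : B0 q) : (A.d p).ker →+ B1 n :=
  AddMonoidHom.mk' (fun s => A.smulr h s x) fun s₁ s₂ => A.add_smulr_of_d_eq_zero h s₁ s₂.2 x

/-- The homomorphism `(s, t) ↦ s·c + a·t` on `Ker ∂ × Ker ∂`, whose range is the
indeterminacy. -/
def indetHom (a : B0 p) (c : B0 r) :
    (A.d (p + q)).ker × (A.d (q + r)).ker →+ B1 (p + q + r) :=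
  (A.kerSmulrHom rfl c).noncommCoprod
    ((A.smulHom (Nat.add_assoc p q r).symm a).comp (A.d (q + r)).ker.subtype)
    fun s _ => A.addCommute_of_d_eq_zero (A.d_smulr_eq_zero rfl s.2 c) _

theorem coe_range_indetHom (a : B0 p) (c : B0 r) :
    ((A.indetHom (q := q) a c).range : Set (B1 (p + q + r))) = indetSet A p q r a c := by
  ext z
  constructor
  · rintro ⟨⟨s, t⟩, rfl⟩
    exact ⟨s, t, s.2, t.2, rfl⟩
  · rintro ⟨s, t, hs, ht, rfl⟩
    exact ⟨(⟨s, hs⟩, ⟨t, ht⟩), rfl⟩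

/-! ### Massey products of fixed representatives -/

/-- The element `-e·c + a·f`. -/
def masseyElement (a : B0 p) (c : B0 r) (e : B1 (p + q)) (f : B1 (q + r)) : B1 (p + q + r) :=
  -A.smulr rfl e c + A.smul (Nat.add_assoc p q r).symm a f

theorem masseyElement_sub_add (a : B0 p) (c : B0 r) (e : B1 (p + q)) (f : B1 (q + r))
    {s : B1 (p + q)} (hs : A.d (p + q) s = 0) (t : B1 (q + r)) :
    A.masseyElement a c (e - s) (f + t) = A.masseyElement a c e f +
      (A.smulr rfl s c + A.smul (Nat.add_assoc p q r).symm a t) := by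
  have hcomm := A.addCommute_of_d_eq_zero (A.d_smulr_eq_zero rfl hs c) (A.masseyElement a c e f)
  rw [← add_assoc, ← hcomm.eq, masseyElement, masseyElement, A.sub_smulr_of_d_eq_zero rfl e hs,
    A.smul_add, neg_sub]
  simp only [sub_eq_add_neg, add_assoc]

/-- The Massey product of fixed representatives: the elements `-e·c + a·f` with `∂e = a·b` and
`∂f = b·c`. -/
def masseyRep (a : B0 p) (b : B0 q) (c : B0 r) : Set (B1 (p + q + r)) :=
  {z | ∃ (e : B1 (p + q)) (f : B1 (q + r)),
    A.d (p + q) e = A.mul rfl a b ∧ A.d (q + r) f = A.mul rfl b c ∧ z = A.masseyElement a c e f}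

variable {A} {a : B0 p} {b : B0 q} {c : B0 r} {e : B1 (p + q)} {f : B1 (q + r)}

theorem d_masseyElement (he : A.d (p + q) e = A.mul rfl a b)
    (hf : A.d (q + r) f = A.mul rfl b c) : A.d (p + q + r) (A.masseyElement a c e f) = 0 := by
  rw [masseyElement, map_add, map_neg, A.d_smulr, A.d_smul, he, hf, A.mul_assoc, neg_add_cancel]

theorem masseyRep_eq_add_indetSet {z : B1 (p + q + r)} (hz : z ∈ A.masseyRep a b c) :
    A.masseyRep a b c = {w | ∃ s ∈ indetSet A p q r a c, w = z + s} := by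
  obtain ⟨e, f, he, hf, rfl⟩ := hz
  ext w
  constructor
  · rintro ⟨e', f', he', hf', rfl⟩
    have hs : A.d (p + q) (-e' + e) = 0 := (A.d _).eq_iff.mp (he.trans he'.symm)
    have ht : A.d (q + r) (-f + f') = 0 := (A.d _).eq_iff.mp (hf'.trans hf.symm)
    refine ⟨_, ⟨-e' + e, -f + f', hs, ht, rfl⟩, ?_⟩
    rw [← A.masseyElement_sub_add a c e f hs, add_neg_cancel_left, sub_eq_add_neg, neg_add_rev,
      neg_neg, add_neg_cancel_left]
  · rintro ⟨_, ⟨s, t, hs, ht, rfl⟩, rfl⟩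
    exact ⟨e - s, f + t, by rw [map_sub, hs, sub_zero, he], by rw [map_add, ht, add_zero, hf],
      (A.masseyElement_sub_add a c e f hs t).symm⟩

/-! ### Change of representatives -/

theorem d_add_smulr_add_defect (u : B1 p) (he : A.d (p + q) e = A.mul rfl a b) :
    A.d (p + q) (e + A.smulr rfl u b + A.defect rfl a (A.d p u) b) =
      A.mul rfl (a + A.d p u) b := by
  rw [map_add, map_add, he, A.d_smulr, A.add_mul, defect]

theorem d_add_smul (v : B1 q) (he : A.d (p + q) e = A.mul rfl a b) :
    A.d (p + q) (e + A.smul rfl a v) = A.mul rfl a (b + A.d q v) := by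
  rw [map_add, he, A.d_smul, A.mul_add]

theorem exists_d_eq_mul_add_d (u : B1 p) (v : B1 q)
    (hab : ∃ e : B1 (p + q), A.d (p + q) e = A.mul rfl a b) :
    ∃ e : B1 (p + q), A.d (p + q) e = A.mul rfl (a + A.d p u) (b + A.d q v) :=
  let ⟨_, he⟩ := hab
  ⟨_, d_add_smul v (d_add_smulr_add_defect u he)⟩

theorem masseyElement_eq_of_eq_add {a' : B0 p} {c' : B0 r} {e' : B1 (p + q)} {f' : B1 (q + r)}
    {y : B1 (p + q + r)} (he : A.d (p + q) e = A.mul rfl a b)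
    (hf : A.d (q + r) f = A.mul rfl b c) (he' : A.smulr rfl e' c' = A.smulr rfl e c + y)
    (hf' : A.smul (Nat.add_assoc p q r).symm a' f' =
      A.smul (Nat.add_assoc p q r).symm a f + y) :
    A.masseyElement a c e f = A.masseyElement a' c' e' f' := by
  rw [masseyElement, masseyElement, he', hf']
  exact (neg_add_add_add_of_addCommute
    (A.addCommute_of_d_eq_zero (d_masseyElement he hf) y)).symm

theorem masseyRep_subset_add_d_left (u : B1 p) :
    A.masseyRep a b c ⊆ A.masseyRep (a + A.d p u) b c := by
  rintro _ ⟨e, f, he, hf, rfl⟩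
  refine ⟨_, f, d_add_smulr_add_defect u he, hf,
    masseyElement_eq_of_eq_add (y := A.smulr (Nat.add_assoc p q r).symm u (A.mul rfl b c) +
      A.defect (Nat.add_assoc p q r).symm a (A.d p u) (A.mul rfl b c)) he hf ?_ ?_⟩
  · rw [A.add_defect_smulr, A.add_smulr, ← defect, A.d_smulr, he, A.smulr_mul_assoc,
      A.defect_mul]
    simp only [add_assoc]
  · rw [A.add_smul, ← defect, A.smul_d, hf]
    exact add_assoc _ _ _

theorem masseyRep_subset_add_d_middle (v : B1 q) :
    A.masseyRep a b c ⊆ A.masseyRep a (b + A.d q v) c := by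
  rintro _ ⟨e, f, he, hf, rfl⟩
  refine ⟨_, _, d_add_smul v he, d_add_smulr_add_defect v hf,
    masseyElement_eq_of_eq_add (y := A.smul (Nat.add_assoc p q r).symm a
      (A.smulr rfl v c + A.defect rfl b (A.d q v) c)) he hf ?_ ?_⟩
  · rw [A.add_smulr, ← defect, A.d_smul, he, A.smul_smulr_assoc, A.smul_add, A.smul_defect]
    exact add_assoc _ _ _
  · rw [add_assoc f, A.smul_add]

theorem masseyRep_subset_add_d_right (w : B1 r) :
    A.masseyRep a b c ⊆ A.masseyRep a b (c + A.d r w) := by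
  rintro _ ⟨e, f, he, hf, rfl⟩
  refine ⟨e, _, he, d_add_smul w hf,
    masseyElement_eq_of_eq_add
      (y := A.smul (Nat.add_assoc p q r).symm a (A.smul rfl b w)) he hf ?_ (A.smul_add _ _ _ _)⟩
  rw [A.smulr_add, ← A.smul_d, he, A.mul_smul_assoc]

theorem masseyRep_add_d (u : B1 p) (v : B1 q) (w : B1 r) :
    A.masseyRep (a + A.d p u) (b + A.d q v) (c + A.d r w) = A.masseyRep a b c := by
  have hsubset (a : B0 p) (b : B0 q) (c : B0 r) (u : B1 p) (v : B1 q) (w : B1 r) :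
      A.masseyRep a b c ⊆ A.masseyRep (a + A.d p u) (b + A.d q v) (c + A.d r w) :=
    (masseyRep_subset_add_d_left u).trans <|
      (masseyRep_subset_add_d_middle v).trans (masseyRep_subset_add_d_right w)
  refine Set.Subset.antisymm ?_ (hsubset a b c u v w)
  simpa only [map_neg, add_neg_cancel_right] using
    hsubset (a + A.d p u) (b + A.d q v) (c + A.d r w) (-u) (-v) (-w)

theorem masseySet_eq_masseyRep : masseySet A p q r a b c = A.masseyRep a b c := by
  ext z
  constructor
  · rintro ⟨u, v, w, hz⟩
    exact (masseyRep_add_d u v w).subset hz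
  · intro hz
    exact ⟨0, 0, 0, (masseyRep_add_d 0 0 0).superset hz⟩

end QuadraticPairAlgebra

/-- STATEMENT 17: For a quadratic pair algebra `B` and homogeneous classes `a`, `b`, `c`
of degrees `p`, `q`, `r` (represented by `a0`, `b0`, `c0`) with `a·b = 0` and `b·c = 0`:
defining elements `e`, `f` exist for arbitrary representatives; every resulting element
`−e·c̄ + ā·f` lies in `h₁B_{p+q+r} = Ker ∂`; and the Massey product set is a coset of the
subgroup `(h₁B_{p+q})·c + a·(h₁B_{q+r})` of `h₁B_{p+q+r}`. -/
theorem quadraticPairAlgebra_massey_coset (A : QuadraticPairAlgebra B0 B1 Bee)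
    (p q r : ℕ) (a0 : B0 p) (b0 : B0 q) (c0 : B0 r)
    (hab : ∃ e : B1 (p + q), A.d (p + q) e = A.mul rfl a0 b0)
    (hbc : ∃ f : B1 (q + r), A.d (q + r) f = A.mul rfl b0 c0) :
    (∀ (u : B1 p) (v : B1 q) (w : B1 r),
      ∃ (e : B1 (p + q)) (f : B1 (q + r)),
        A.d (p + q) e = A.mul rfl (a0 + A.d p u) (b0 + A.d q v) ∧
        A.d (q + r) f = A.mul rfl (b0 + A.d q v) (c0 + A.d r w)) ∧
    (∀ z ∈ masseySet A p q r a0 b0 c0, A.d (p + q + r) z = 0) ∧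
    (∃ S : AddSubgroup (B1 (p + q + r)),
      (S : Set (B1 (p + q + r))) = indetSet A p q r a0 c0) ∧
    (∃ g ∈ masseySet A p q r a0 b0 c0,
      masseySet A p q r a0 b0 c0 =
        {z | ∃ s ∈ indetSet A p q r a0 c0, z = g + s}) := by
  rw [QuadraticPairAlgebra.masseySet_eq_masseyRep]
  refine ⟨fun u v w => ?_, ?_, ⟨(A.indetHom a0 c0).range, A.coe_range_indetHom a0 c0⟩, ?_⟩
  · obtain ⟨e, he⟩ := QuadraticPairAlgebra.exists_d_eq_mul_add_d u v hab
    obtain ⟨f, hf⟩ := QuadraticPairAlgebra.exists_d_eq_mul_add_d v w hbc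
    exact ⟨e, f, he, hf⟩
  · rintro _ ⟨e, f, he, hf, rfl⟩
    exact QuadraticPairAlgebra.d_masseyElement he hf
  · obtain ⟨e, he⟩ := hab
    obtain ⟨f, hf⟩ := hbc
    have hz : A.masseyElement a0 c0 e f ∈ A.masseyRep a0 b0 c0 := ⟨e, f, he, hf, rfl⟩
    exact ⟨_, hz, QuadraticPairAlgebra.masseyRep_eq_add_indetSet hz⟩
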